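/- Let β : ℤ^n → ℤ^m be an integer matrix map and α = 2β. Let K ⊆ ℤ^m be a subgroup with im(β) ⊆ K. If K/im(β) ≅ ℤ^r ⊕ ℤ/d_1ℤ ⊕ ... ⊕ ℤ/d_kℤ with 1 < d_1 | ... | d_k, and β has rank ρ as a map into K, then K/im(α) ≅ ℤ^r ⊕ ℤ/2d_1ℤ ⊕ ... ⊕ ℤ/2d_kℤ ⊕ (ℤ/2ℤ)^{ρ−k}. -/

import Mathlib

open Matrix

/-!
Let `M` be free of rank `s` over a principal ideal domain `R`, and let `M ⧸ N` be a product of `s`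
cyclic modules `R ⧸ (dᵢ)`, where `dᵢ` may be zero or a unit. Then `M ⧸ a • N` is the product of the
`R ⧸ (a * dᵢ)`: by induction on the factorization of `a` it is enough to scale by a prime `p`. By
Schanuel's lemma, an isomorphism `M ⧸ N ≃ Rˢ ⧸ K` between quotients of projective modules comes from
an isomorphism `Rˢ × M ≃ M × Rˢ` carrying `Rˢ × N` to `M × K`. Scaling both submodules by `p` gives
`(R ⧸ p)ˢ × (M ⧸ p • N) ≃ (R ⧸ p)ˢ × (Rˢ ⧸ p • K)`, and the copies of the simple module `R ⧸ p`
cancel.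

In the theorem, a factor `ℤ` corresponds to `dᵢ = 0`, while `dᵢ = 1` accounts for a factor `ZMod 2`
of the quotient by `im α`. Since `K` has rank `r + ρ`, there are `ρ - k` of the latter; `k ≤ ρ`
holds because `K` surjects onto `(ℤ ⧸ d₁)^(r + k)`.
-/

open scoped Pointwise

section Cancellation

variable {R S A B : Type*} [Ring R] [AddCommGroup S] [AddCommGroup A] [AddCommGroup B]
  [Module R S] [Module R A] [Module R B]

theorem nonempty_linearEquiv_of_bijective_fst_apply_inl (φ : (S × A) ≃ₗ[R] S × B)
    (h : Function.Bijective fun s => (φ (s, 0)).1) : Nonempty (A ≃ₗ[R] B) := by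
  let g : B →ₗ[R] A := LinearMap.snd R S A ∘ₗ φ.symm.toLinearMap ∘ₗ LinearMap.inr R S B
  have hg_inj : Function.Injective g := by
    refine (injective_iff_map_eq_zero g).2 fun b hb => ?_
    obtain ⟨⟨s, a⟩, hsa⟩ := φ.surjective (0, b)
    obtain rfl : a = 0 := by simpa [g, ← hsa] using hb
    obtain rfl : s = 0 := h.injective (by simp [hsa, ← Prod.zero_eq_mk])
    exact (congrArg Prod.snd hsa).symm.trans (by simp [← Prod.zero_eq_mk])
  have hg_surj : Function.Surjective g := fun a => by
    obtain ⟨s, hs⟩ := h.surjective (-(φ (0, a)).1)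
    have hφ : φ (s, a) = (0, (φ (s, a)).2) := by
      refine Prod.ext ?_ rfl
      rw [← add_zero s, ← zero_add a, ← Prod.mk_add_mk, map_add, Prod.fst_add]
      simp [hs]
    exact ⟨(φ (s, a)).2, by simp [g, ← hφ]⟩
  exact ⟨(LinearEquiv.ofBijective g ⟨hg_inj, hg_surj⟩).symm⟩

theorem nonempty_linearEquiv_of_isSimpleModule_prod [IsSimpleModule R S]
    (φ : (S × A) ≃ₗ[R] S × B) : Nonempty (A ≃ₗ[R] B) := by
  let φ₁₁ : S →ₗ[R] S := LinearMap.fst R S B ∘ₗ φ.toLinearMap ∘ₗ LinearMap.inl R S A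
  rcases φ₁₁.bijective_or_eq_zero with hbij | hzero
  · exact nonempty_linearEquiv_of_bijective_fst_apply_inl φ hbij
  · -- As `φ₁₁ = 0`, the identity `φ φ⁻¹ = 1` gives `φ₁₂ ψ₂₁ = 1`, the corner of `φ` after shearing.
    let ψ₂₁ : S →ₗ[R] A := LinearMap.snd R S A ∘ₗ φ.symm.toLinearMap ∘ₗ LinearMap.inl R S B
    let shear : (S × A) ≃ₗ[R] S × A := (LinearEquiv.refl R S).skewProd (LinearEquiv.refl R A) ψ₂₁
    have hfst (s t : S) : (φ (s, 0)).1 = (φ (t, 0)).1 :=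
      (LinearMap.congr_fun hzero s).trans (LinearMap.congr_fun hzero t).symm
    have hshear (s : S) : ((shear ≪≫ₗ φ) (s, 0)).1 = s := calc
      (φ (s, 0 + ψ₂₁ s)).1 = (φ (s, 0)).1 + (φ (0, ψ₂₁ s)).1 := by
        rw [← Prod.fst_add, ← map_add]; simp
      _ = (φ ((φ.symm (s, 0)).1, 0)).1 + (φ (0, ψ₂₁ s)).1 := by rw [hfst]
      _ = (φ (φ.symm (s, 0))).1 := by
        rw [← Prod.fst_add, ← map_add]; simp [ψ₂₁]
      _ = s := by simp
    refine nonempty_linearEquiv_of_bijective_fst_apply_inl (shear ≪≫ₗ φ) ?_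
    simp only [hshear]
    exact Function.bijective_id

theorem nonempty_linearEquiv_of_pi_isSimpleModule_prod [IsSimpleModule R S] {ι : Type*} [Finite ι]
    (φ : ((ι → S) × A) ≃ₗ[R] (ι → S) × B) : Nonempty (A ≃ₗ[R] B) := by
  obtain ⟨n, ⟨e⟩⟩ := Finite.exists_equiv_fin ι
  replace φ : ((Fin n → S) × A) ≃ₗ[R] (Fin n → S) × B :=
    let reindex := LinearEquiv.funCongrLeft R S e
    reindex.prodCongr (.refl R A) ≪≫ₗ φ ≪≫ₗ reindex.symm.prodCongr (.refl R B)
  clear e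
  induction n generalizing A B with
  | zero => exact ⟨LinearEquiv.uniqueProd.symm ≪≫ₗ φ ≪≫ₗ LinearEquiv.uniqueProd⟩
  | succ n ih =>
    let split : (Fin (n + 1) → S) ≃ₗ[R] S × (Fin n → S) := (Fin.consLinearEquiv R fun _ => S).symm
    obtain ⟨ψ⟩ := nonempty_linearEquiv_of_isSimpleModule_prod
      ((LinearEquiv.prodAssoc R S _ A).symm ≪≫ₗ split.symm.prodCongr (.refl R A) ≪≫ₗ φ ≪≫ₗ
        split.prodCongr (.refl R B) ≪≫ₗ LinearEquiv.prodAssoc R S _ B)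
    exact ih ψ

end Cancellation

section Schanuel

variable {R P Q : Type*} [CommRing R] [AddCommGroup P] [AddCommGroup Q]
  [Module R P] [Module R Q]

/-- A quotient of a product by a product of submodules is the product of the quotients. -/
noncomputable def quotientProdEquiv (S : Submodule R P) (T : Submodule R Q) :
    ((P × Q) ⧸ S.prod T) ≃ₗ[R] (P ⧸ S) × (Q ⧸ T) :=
  Submodule.quotEquivOfEq _ _ (by rw [LinearMap.ker_prodMap, S.ker_mkQ, T.ker_mkQ]) ≪≫ₗ
    (S.mkQ.prodMap T.mkQ).quotKerEquivOfSurjective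
      (S.mkQ_surjective.prodMap T.mkQ_surjective)

theorem pointwise_smul_prod (a : R) (S : Submodule R P) (T : Submodule R Q) :
    a • S.prod T = (a • S).prod (a • T) := by
  ext ⟨p, q⟩
  simp only [Submodule.mem_smul_pointwise_iff_exists, Submodule.mem_prod, Prod.exists,
    Prod.smul_mk, Prod.mk.injEq]
  grind

theorem exists_linearEquiv_map_top_prod [Module.Projective R P] [Module.Projective R Q]
    {N : Submodule R P} {K : Submodule R Q} (e : (P ⧸ N) ≃ₗ[R] Q ⧸ K) :
    ∃ Φ : (Q × P) ≃ₗ[R] P × Q,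
      ((⊤ : Submodule R Q).prod N).map (Φ : (Q × P) →ₗ[R] P × Q) = (⊤ : Submodule R P).prod K := by
  obtain ⟨u, hu⟩ := Module.projective_lifting_property K.mkQ (e ∘ₗ N.mkQ) K.mkQ_surjective
  obtain ⟨v, hv⟩ := Module.projective_lifting_property N.mkQ (e.symm ∘ₗ K.mkQ) N.mkQ_surjective
  let shearP : (Q × P) ≃ₗ[R] Q × P := (LinearEquiv.refl R Q).skewProd (LinearEquiv.refl R P) v
  let shearQ : (P × Q) ≃ₗ[R] P × Q := (LinearEquiv.refl R P).skewProd (LinearEquiv.refl R Q) u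
  let Φ := shearP.symm ≪≫ₗ LinearEquiv.prodComm R Q P ≪≫ₗ shearQ
  have hΦ (x : Q × P) : K.mkQ (Φ x).2 = e (N.mkQ x.2) := calc
    K.mkQ (Φ x).2 = K.mkQ x.1 + (K.mkQ ∘ₗ u) (x.2 - v x.1) := by simp [Φ, shearP, shearQ]
    _ = e (N.mkQ x.2) := by
      have hvx := LinearMap.congr_fun hv x.1
      simp only [LinearMap.comp_apply, LinearEquiv.coe_coe] at hvx
      rw [hu, map_sub]
      simp [-Submodule.mkQ_apply, hvx]
  refine ⟨Φ, ?_⟩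
  rw [← LinearEquiv.symm_symm Φ, ← Submodule.comap_equiv_eq_map_symm]
  ext x
  obtain ⟨y, rfl⟩ := Φ.surjective x
  simp only [Submodule.mem_comap, Submodule.mem_prod, Submodule.mem_top, true_and,
    LinearEquiv.coe_coe, LinearEquiv.symm_apply_apply]
  rw [← Submodule.Quotient.mk_eq_zero K, ← Submodule.mkQ_apply, hΦ]
  simp

end Schanuel

section CyclicDecomposition

variable {R ι M : Type*} [CommRing R] [AddCommGroup M] [Module R M]

theorem pointwise_smul_pi_span_singleton (a : R) (d : ι → R) :
    a • Submodule.pi Set.univ (fun i => Ideal.span {d i}) =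
      Submodule.pi Set.univ fun i => Ideal.span {a * d i} := by
  ext x
  simp only [Submodule.mem_smul_pointwise_iff_exists, Submodule.mem_pi, Set.mem_univ,
    forall_const, Ideal.mem_span_singleton]
  constructor
  · rintro ⟨y, hy, rfl⟩ i
    exact mul_dvd_mul_left a (hy i)
  · intro hx
    choose y hy using hx
    exact ⟨fun i => d i * y i, fun i => dvd_mul_right _ _, funext fun i => by simp [hy, mul_assoc]⟩

theorem pointwise_smul_eq_self_of_isUnit {a : R} (ha : IsUnit a) (N : Submodule R M) :
    a • N = N := by
  obtain ⟨u, rfl⟩ := ha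
  refine le_antisymm (Submodule.smul_le_self_of_tower _ N) fun x hx => ?_
  exact (Submodule.mem_smul_pointwise_iff_exists _ _ _).2
    ⟨u⁻¹ • x, N.smul_mem _ hx, smul_inv_smul u x⟩

variable [Fintype ι] [Module.Free R M] [Module.Finite R M]

theorem nonempty_quotient_smul_linearEquiv_pi_of_isSimpleModule [StrongRankCondition R]
    (hM : Module.finrank R M = Fintype.card ι) {p : R} [IsSimpleModule R (R ⧸ Ideal.span {p})]
    {N : Submodule R M} {d : ι → R} (e : (M ⧸ N) ≃ₗ[R] Π i, R ⧸ Ideal.span {d i}) :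
    Nonempty ((M ⧸ p • N) ≃ₗ[R] Π i, R ⧸ Ideal.span {p * d i}) := by
  classical
  let b : M ≃ₗ[R] (ι → R) := LinearEquiv.ofFinrankEq M (ι → R) (by simp [hM])
  let K : Submodule R (ι → R) := Submodule.pi Set.univ fun i => Ideal.span {d i}
  obtain ⟨Φ, hΦ⟩ := exists_linearEquiv_map_top_prod (K := K)
    (e ≪≫ₗ (Submodule.quotientPi fun i => Ideal.span {d i}).symm)
  let modFree : ((ι → R) ⧸ p • (⊤ : Submodule R (ι → R))) ≃ₗ[R] (ι → R ⧸ Ideal.span {p}) :=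
    Submodule.quotEquivOfEq _ _ (by simpa using pointwise_smul_pi_span_singleton p (1 : ι → R)) ≪≫ₗ
      Submodule.quotientPi fun _ => Ideal.span {p}
  let modM : (M ⧸ p • (⊤ : Submodule R M)) ≃ₗ[R] (ι → R ⧸ Ideal.span {p}) :=
    Submodule.Quotient.equiv _ _ b
      (by rw [Submodule.map_pointwise_smul, Submodule.map_top, LinearEquiv.range]) ≪≫ₗ modFree
  let modK : ((ι → R) ⧸ p • K) ≃ₗ[R] Π i, R ⧸ Ideal.span {p * d i} :=
    Submodule.quotEquivOfEq _ _ (pointwise_smul_pi_span_singleton p d) ≪≫ₗ Submodule.quotientPi _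
  let modΦ : (((ι → R) × M) ⧸ (p • (⊤ : Submodule R (ι → R))).prod (p • N)) ≃ₗ[R]
      (M × (ι → R)) ⧸ (p • (⊤ : Submodule R M)).prod (p • K) :=
    Submodule.Quotient.equiv _ _ Φ
      (by rw [← pointwise_smul_prod, Submodule.map_pointwise_smul, hΦ, pointwise_smul_prod])
  exact nonempty_linearEquiv_of_pi_isSimpleModule_prod
    (modFree.symm.prodCongr (.refl R _) ≪≫ₗ (quotientProdEquiv _ _).symm ≪≫ₗ modΦ ≪≫ₗ
      quotientProdEquiv _ _ ≪≫ₗ modM.prodCongr modK)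

theorem nonempty_quotient_smul_linearEquiv_pi [IsDomain R] [IsPrincipalIdealRing R]
    (hM : Module.finrank R M = Fintype.card ι) (a : R)
    {N : Submodule R M} {d : ι → R} (e : (M ⧸ N) ≃ₗ[R] Π i, R ⧸ Ideal.span {d i}) :
    Nonempty ((M ⧸ a • N) ≃ₗ[R] Π i, R ⧸ Ideal.span {a * d i}) := by
  induction a using UniqueFactorizationMonoid.induction_on_prime with
  | h₁ =>
    let b : M ≃ₗ[R] (ι → R) := LinearEquiv.ofFinrankEq M (ι → R) (by simp [hM])
    exact ⟨Submodule.quotEquivOfEqBot _ (zero_smul R N) ≪≫ₗ b ≪≫ₗ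
      LinearEquiv.piCongrRight fun i => (Submodule.quotEquivOfEqBot _ (by simp)).symm⟩
  | h₂ a ha =>
    exact ⟨Submodule.quotEquivOfEq _ _ (pointwise_smul_eq_self_of_isUnit ha N) ≪≫ₗ e ≪≫ₗ
      LinearEquiv.piCongrRight fun i =>
        Submodule.quotEquivOfEq _ _ (Ideal.span_singleton_mul_left_unit ha (d i)).symm⟩
  | h₃ a p _ hp ih =>
    have : IsSimpleModule R (R ⧸ Ideal.span {p}) := isSimpleModule_iff_isCoatom.2
      (PrincipalIdealRing.isMaximal_of_irreducible hp.irreducible).out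
    obtain ⟨e₁⟩ := ih
    obtain ⟨e₂⟩ := nonempty_quotient_smul_linearEquiv_pi_of_isSimpleModule hM (p := p) e₁
    exact ⟨Submodule.quotEquivOfEq _ _ (mul_smul p a N) ≪≫ₗ e₂ ≪≫ₗ LinearEquiv.piCongrRight
      fun i => Submodule.quotEquivOfEq _ _ (by rw [mul_assoc])⟩

theorem card_le_finrank_of_surjective {I : Ideal R} (hI : I ≠ ⊤) (f : M →ₗ[R] ι → R ⧸ I)
    (hf : Function.Surjective f) : Fintype.card ι ≤ Module.finrank R M := by
  have : Nontrivial (R ⧸ I) := Ideal.Quotient.nontrivial_iff.2 hI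
  have : Nontrivial R := (Ideal.Quotient.mk_surjective (I := I)).nontrivial
  let b := Module.finBasis R M
  have hspan : Submodule.span (R ⧸ I) (Set.range (f ∘ b)) = ⊤ := by
    refine eq_top_iff.2 fun x _ => Submodule.span_le_restrictScalars R (R ⧸ I) _ ?_
    rw [Set.range_comp, Submodule.span_image, b.span_eq, Submodule.map_top,
      LinearMap.range_eq_top.2 hf]
    trivial
  have hle := finrank_range_le_card (R := R ⧸ I) (f ∘ b)
  rw [Set.finrank, hspan, finrank_top] at hle
  simpa using hle

theorem card_le_finrank_of_quotient_linearEquiv_pi {N : Submodule R M} {d : ι → R}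
    (hd : Ideal.span (Set.range d) ≠ ⊤)
    (e : (M ⧸ N) ≃ₗ[R] Π i, R ⧸ Ideal.span {d i}) :
    Fintype.card ι ≤ Module.finrank R M := by
  have hle (i : ι) : Ideal.span {d i} ≤ Ideal.span (Set.range d) := Ideal.span_mono (by simp)
  let red : (Π i, R ⧸ Ideal.span {d i}) →ₗ[R] ι → R ⧸ Ideal.span (Set.range d) :=
    LinearMap.piMap fun i => Submodule.factor (hle i)
  have hred : Function.Surjective red :=
    Function.Surjective.piMap fun i => Submodule.factor_surjective (hle i)
  exact card_le_finrank_of_surjective hd (red ∘ₗ e.toLinearMap ∘ₗ N.mkQ)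
    (hred.comp (e.surjective.comp N.mkQ_surjective))

end CyclicDecomposition

section InvariantFactors

variable {R ι κ τ M : Type*} [CommRing R]

theorem finrank_pi_quotient_span_singleton [IsDomain R] [Finite ι] {d : ι → R}
    (hd : ∀ i, d i ≠ 0) : Module.finrank R (Π i, R ⧸ Ideal.span {d i}) = 0 := by
  classical
  have := Fintype.ofFinite ι
  have hprod : ∏ i, d i ≠ 0 := Finset.prod_ne_zero_iff.2 fun i _ => hd i
  refine Module.finrank_eq_zero_iff.2 fun x => ⟨∏ i, d i, hprod, funext fun i => ?_⟩
  obtain ⟨y, hy⟩ := Ideal.Quotient.mk_surjective (x i)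
  rw [Pi.smul_apply, ← hy, Pi.zero_apply, ← Ideal.Quotient.mk_eq_mk, ← Submodule.Quotient.mk_smul,
    Submodule.Quotient.mk_eq_zero, smul_eq_mul, Ideal.mem_span_singleton]
  exact dvd_mul_of_dvd_left (Finset.dvd_prod_of_mem d (Finset.mem_univ i)) y

theorem finrank_prod_of_hasRankNullity.{u, v, w} {R : Type u} {P : Type v} {Q : Type w} [Ring R]
    [StrongRankCondition R] [HasRankNullity.{max v w} R] [AddCommGroup P] [AddCommGroup Q]
    [Module R P] [Module R Q] [Module.Finite R P] [Module.Finite R Q] :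
    Module.finrank R (P × Q) = Module.finrank R P + Module.finrank R Q := by
  rw [← (LinearMap.ker (LinearMap.fst R P Q)).finrank_quotient_add_finrank,
    ((LinearMap.fst R P Q).quotKerEquivOfSurjective LinearMap.fst_surjective).finrank_eq,
    LinearMap.ker_fst, LinearMap.finrank_range_of_inj LinearMap.inr_injective]

/-- A product of cyclic modules splits along a partition of its index set; the generators of the
annihilators are glued by `Sum.elim`. -/
def piSumElimEquiv (c : ι → R) (d : κ → R) :
    (Π i, R ⧸ Ideal.span {Sum.elim c d i}) ≃ₗ[R]
      (Π i, R ⧸ Ideal.span {c i}) × Π j, R ⧸ Ideal.span {d j} :=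
  LinearEquiv.sumPiEquivProdPi R ι κ fun i => R ⧸ Ideal.span {Sum.elim c d i}

/-- The free part of a finitely generated module, encoded as cyclic factors with generator `0`. -/
def piSumElimZeroEquiv (ι : Type*) (d : κ → R) :
    (Π i, R ⧸ Ideal.span {Sum.elim (0 : ι → R) d i}) ≃ₗ[R]
      (ι → R) × Π j, R ⧸ Ideal.span {d j} :=
  piSumElimEquiv 0 d ≪≫ₗ
    (LinearEquiv.piCongrRight fun _ => Submodule.quotEquivOfEqBot _ (by simp)).prodCongr (.refl R _)

/-- A product of cyclic modules does not change when it is padded by trivial factors, encoded as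
cyclic factors with generator `1`. -/
def piSumElimOneEquiv (d : κ → R) (τ : Type*) :
    (Π j, R ⧸ Ideal.span {Sum.elim d (1 : τ → R) j}) ≃ₗ[R] Π j, R ⧸ Ideal.span {d j} :=
  have (t : τ) : Subsingleton (R ⧸ Ideal.span {(1 : τ → R) t}) :=
    Ideal.Quotient.subsingleton_iff.2 Ideal.span_singleton_one
  have : Unique (Π t, R ⧸ Ideal.span {(1 : τ → R) t}) := Unique.mk' _
  piSumElimEquiv d 1 ≪≫ₗ LinearEquiv.prodUnique

theorem span_range_ne_top_of_dvd [Nontrivial R] {k : ℕ} {d : Fin k → R}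
    (hd : ∀ j, ¬IsUnit (d j)) (hdvd : ∀ i j, i ≤ j → d i ∣ d j) :
    Ideal.span (Set.range d) ≠ ⊤ := by
  cases k with
  | zero => simp
  | succ k =>
    have hle : Ideal.span (Set.range d) ≤ Ideal.span {d 0} :=
      Ideal.span_le.2 <| Set.range_subset_iff.2 fun j =>
        Ideal.mem_span_singleton.2 (hdvd 0 j (Fin.zero_le j))
    exact ne_top_of_le_ne_top (mt Ideal.span_singleton_eq_top.1 (hd 0)) hle

variable [AddCommGroup M] [Module R M] [Module.Finite R M] {N : Submodule R M}

theorem finrank_eq_card_add_finrank_of_quotient_linearEquiv_prod [IsDomain R] [Fintype ι] [Finite κ]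
    {d : κ → R} (hd : ∀ j, d j ≠ 0)
    (e : (M ⧸ N) ≃ₗ[R] (ι → R) × Π j, R ⧸ Ideal.span {d j}) :
    Module.finrank R M = Fintype.card ι + Module.finrank R N := by
  rw [← N.finrank_quotient_add_finrank, e.finrank_eq, finrank_prod_of_hasRankNullity,
    finrank_pi_quotient_span_singleton hd, Module.finrank_fintype_fun_eq_card, add_zero]

variable [Module.Free R M] [Fintype κ]

theorem card_add_card_le_finrank_of_quotient_linearEquiv_prod [Fintype ι] {d : κ → R}
    (hd : Ideal.span (Set.range d) ≠ ⊤)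
    (e : (M ⧸ N) ≃ₗ[R] (ι → R) × Π j, R ⧸ Ideal.span {d j}) :
    Fintype.card ι + Fintype.card κ ≤ Module.finrank R M := by
  have hd' : Ideal.span (Set.range (Sum.elim (0 : ι → R) d)) ≠ ⊤ := by
    refine ne_top_of_le_ne_top hd (Ideal.span_le.2 (Set.range_subset_iff.2 ?_))
    rintro (_ | j)
    · exact zero_mem _
    · exact Ideal.subset_span ⟨j, rfl⟩
  simpa using card_le_finrank_of_quotient_linearEquiv_pi hd' (e ≪≫ₗ (piSumElimZeroEquiv ι d).symm)

variable [IsDomain R] [IsPrincipalIdealRing R]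

theorem nonempty_quotient_smul_linearEquiv_prod [Fintype ι] [Fintype τ]
    (hM : Module.finrank R M = Fintype.card ι + (Fintype.card κ + Fintype.card τ)) (a : R)
    {d : κ → R} (e : (M ⧸ N) ≃ₗ[R] (ι → R) × Π j, R ⧸ Ideal.span {d j}) :
    Nonempty ((M ⧸ a • N) ≃ₗ[R]
      (ι → R) × (Π j, R ⧸ Ideal.span {a * d j}) × (τ → R ⧸ Ideal.span {a})) := by
  let padded : κ ⊕ τ → R := Sum.elim d 1
  let scaled : κ ⊕ τ → R := Sum.elim (fun j => a * d j) fun _ => a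
  have hscaled (i : ι ⊕ κ ⊕ τ) :
      a * Sum.elim (0 : ι → R) padded i = Sum.elim (0 : ι → R) scaled i := by
    rcases i with i | j | t <;> simp [padded, scaled]
  let e' : (M ⧸ N) ≃ₗ[R] Π i, R ⧸ Ideal.span {Sum.elim (0 : ι → R) padded i} :=
    e ≪≫ₗ (LinearEquiv.refl R (ι → R)).prodCongr (piSumElimOneEquiv d τ).symm ≪≫ₗ
      (piSumElimZeroEquiv ι padded).symm
  obtain ⟨f⟩ := nonempty_quotient_smul_linearEquiv_pi (by simpa using hM) a e'
  exact ⟨f ≪≫ₗ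
    LinearEquiv.piCongrRight (fun i => Submodule.quotEquivOfEq _ _ (by rw [hscaled])) ≪≫ₗ
    piSumElimZeroEquiv ι scaled ≪≫ₗ
    (LinearEquiv.refl R (ι → R)).prodCongr (piSumElimEquiv (fun j => a * d j) fun _ => a)⟩

theorem stmt_8_general [Finite ι] (N : Submodule R M) (a : R) {d : κ → R}
    (hd0 : ∀ j, d j ≠ 0) (hd : Ideal.span (Set.range d) ≠ ⊤)
    (e : (M ⧸ N) ≃ₗ[R] (ι → R) × Π j, R ⧸ Ideal.span {d j}) :
    Nonempty ((M ⧸ a • N) ≃ₗ[R] (ι → R) × (Π j, R ⧸ Ideal.span {a * d j}) ×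
      (Fin (Module.finrank R N - Fintype.card κ) → R ⧸ Ideal.span {a})) := by
  have := Fintype.ofFinite ι
  have hle := card_add_card_le_finrank_of_quotient_linearEquiv_prod hd e
  have heq := finrank_eq_card_add_finrank_of_quotient_linearEquiv_prod hd0 e
  refine nonempty_quotient_smul_linearEquiv_prod ?_ a e
  rw [Fintype.card_fin]
  lia

end InvariantFactors

theorem comap_subtype_pointwise_smul {R M : Type*} [CommRing R] [AddCommGroup M] [Module R M]
    {L K : Submodule R M} (h : L ≤ K) (a : R) :
    (a • L).comap K.subtype = a • L.comap K.subtype := by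
  apply Submodule.map_injective_of_injective K.subtype_injective
  rw [Submodule.map_pointwise_smul, Submodule.map_comap_subtype, Submodule.map_comap_subtype,
    inf_eq_right.2 h, inf_eq_right.2 ((Submodule.smul_le_self_of_tower a L).trans h)]

theorem range_mulVecLin_smul {R m n : Type*} [CommRing R] [Fintype n] (a : R) (β : Matrix m n R) :
    LinearMap.range (a • β).mulVecLin = a • LinearMap.range β.mulVecLin := by
  ext x
  simp [Submodule.mem_smul_pointwise_iff_exists]

/-- Over `ℤ`, a product of quotients by principal ideals is a product of modules `ZMod`. -/
def piQuotientSpanEquivPiZMod {ι : Type*} {c : ι → ℤ} {d : ι → ℕ} (h : ∀ i, c i = d i) :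
    (Π i, ℤ ⧸ Ideal.span {c i}) ≃ₗ[ℤ] Π i, ZMod (d i) :=
  LinearEquiv.piCongrRight fun i => Submodule.quotEquivOfEq _ _ (by rw [h]) ≪≫ₗ
    (Int.quotientSpanNatEquivZMod (d i)).toAddEquiv.toIntLinearEquiv

theorem nonempty_quotient_smul_linearEquiv_prod_zmod {M : Type*} [AddCommGroup M]
    [Module.Free ℤ M] [Module.Finite ℤ M] {N : Submodule ℤ M} {r k : ℕ} (a : ℕ) {d : Fin k → ℕ}
    (hd : ∀ j, 1 < d j) (hdvd : ∀ i j, i ≤ j → d i ∣ d j)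
    (e : (M ⧸ N) ≃ₗ[ℤ] (Fin r → ℤ) × Π j, ZMod (d j)) :
    Nonempty ((M ⧸ (a : ℤ) • N) ≃ₗ[ℤ] (Fin r → ℤ) × (Π j, ZMod (a * d j)) ×
      (Fin (Module.finrank ℤ N - k) → ZMod a)) := by
  have hspan : Ideal.span (Set.range fun j => (d j : ℤ)) ≠ ⊤ :=
    span_range_ne_top_of_dvd (fun j => by simpa [Int.ofNat_isUnit] using (hd j).ne')
      fun i j hij => Int.natCast_dvd_natCast.2 (hdvd i j hij)
  obtain ⟨f⟩ := stmt_8_general N a (fun j => by exact_mod_cast (hd j).ne_bot) hspan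
    (e ≪≫ₗ (LinearEquiv.refl ℤ _).prodCongr (piQuotientSpanEquivPiZMod fun _ => rfl).symm)
  rw [Fintype.card_fin] at f
  exact ⟨f ≪≫ₗ (LinearEquiv.refl ℤ _).prodCongr
    ((piQuotientSpanEquivPiZMod fun _ => (Nat.cast_mul _ _).symm).prodCongr
      (piQuotientSpanEquivPiZMod fun _ => rfl))⟩

/-- let `β : ℤⁿ → ℤᵐ` be an integer matrix map, `α = 2β`, and `K ⊆ ℤᵐ` a
subgroup containing `im β`. If `K/im(β) ≅ ℤʳ ⊕ ℤ/d_1ℤ ⊕ ⋯ ⊕ ℤ/d_kℤ` with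
`1 < d_1 ∣ ⋯ ∣ d_k`, and `β` has rank `ρ`, then
`K/im(α) ≅ ℤʳ ⊕ ℤ/2d_1ℤ ⊕ ⋯ ⊕ ℤ/2d_kℤ ⊕ (ℤ/2ℤ)^{ρ−k}`. -/
theorem stmt_8 (m n r k : ℕ) (β : Matrix (Fin m) (Fin n) ℤ)
    (K : Submodule ℤ (Fin m → ℤ)) (d : Fin k → ℕ)
    (hd1 : ∀ j, 1 < d j)
    (hdvd : ∀ i j : Fin k, i ≤ j → d i ∣ d j)
    (hβK : LinearMap.range (Matrix.mulVecLin β) ≤ K)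
    (hαK : LinearMap.range (Matrix.mulVecLin ((2 : ℤ) • β)) ≤ K)
    (hβ : Nonempty
      ((K ⧸ (LinearMap.range (Matrix.mulVecLin β)).comap K.subtype) ≃ₗ[ℤ]
        (Fin r → ℤ) × ((j : Fin k) → ZMod (d j)))) :
    Nonempty
      ((K ⧸ (LinearMap.range (Matrix.mulVecLin ((2 : ℤ) • β))).comap K.subtype) ≃ₗ[ℤ]
        (Fin r → ℤ) × ((j : Fin k) → ZMod (2 * d j)) × (Fin (β.rank - k) → ZMod 2)) := by
  rw [range_mulVecLin_smul, comap_subtype_pointwise_smul hβK, Matrix.rank,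
    ← (Submodule.comapSubtypeEquivOfLe hβK).finrank_eq]
  exact hβ.elim fun e => nonempty_quotient_smul_linearEquiv_prod_zmod 2 hd1 hdvd e
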